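/- Fix an admissible control law and for 0 ≤ k ≤ N−1 define û(k) = E[u(k) | σ(y(0),…,y(k−2))] and ũ(k) = u(k) − û(k), and set ỹ¹(k) = y(k) − C x̂¹(k). Then for every k ≥ 1, almost surely ũ(k) = F(k) ỹ¹(k) + F¹(k) ỹ(k−1), where F¹(k) = G(k) + F(k) C (K¹(k−1) + B F(k−1)); moreover ũ(k) and û(k) are independent. -/

import Mathlib

open MeasureTheory ProbabilityTheory Matrix Finset

noncomputable section

/-- Index type for vectors partitioned into three blocks of sizes `v 0, v 1, v 2`. -/
abbrev idx (v : Fin 3 → ℕ) : Type := Σ i : Fin 3, Fin (v i)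

/-- The block-index sets `S1 = {1,3}`, `S2 = {1,2}`, `S3 = {2,3}` (0-based:
`{0,2}, {0,1}, {1,2}`). -/
def Sset : Fin 3 → Finset (Fin 3) := ![{0, 2}, {0, 1}, {1, 2}]

/-- Index type for block rows/columns restricted to the blocks in `s`. -/
abbrev ridx (v : Fin 3 → ℕ) (s : Finset (Fin 3)) : Type := {a : idx v // a.1 ∈ s}

/-- A block-partitioned matrix is block diagonal when all off-diagonal blocks vanish. -/
def BlockDiag {v w : Fin 3 → ℕ} (M : Matrix (idx v) (idx w) ℝ) : Prop :=
  ∀ a b, a.1 ≠ b.1 → M a b = 0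

/-- A block-partitioned matrix has zero blocks in positions `(1,2), (2,3), (3,1)`
(1-based), i.e. in positions `(i, i+1 mod 3)` (0-based). -/
def CyclicSparse {v w : Fin 3 → ℕ} (M : Matrix (idx v) (idx w) ℝ) : Prop :=
  ∀ a b, b.1 = a.1 + 1 → M a b = 0

/-- `[M]_{s t}`: the submatrix of the block rows in `s` and block columns in `t`. -/
def subBB {v w : Fin 3 → ℕ} (M : Matrix (idx v) (idx w) ℝ) (s t : Finset (Fin 3)) :
    Matrix (ridx v s) (ridx w t) ℝ := fun a b => M a.1 b.1

/-- `[M]_{{1,2,3} t}`: all block rows, block columns restricted to `t`. -/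
def subCols {v w : Fin 3 → ℕ} (M : Matrix (idx v) (idx w) ℝ) (t : Finset (Fin 3)) :
    Matrix (idx v) (ridx w t) ℝ := fun a b => M a b.1

/-- `[M]ᵢ`: the `i`-th block row of `M`. -/
def blockRow {v w : Fin 3 → ℕ} (M : Matrix (idx v) (idx w) ℝ) (i : Fin 3) :
    Matrix (Fin (v i)) (idx w) ℝ := fun a b => M ⟨i, a⟩ b

variable {nv qv pv : Fin 3 → ℕ}

/-- The gain `K¹` of the three-player estimator, built from the error covariance `P`: its
`i`-th block row is supported on the block columns in `Sᵢ`, where it equals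
`[A]ᵢ [P]_{{1,2,3} Sᵢ} [C]ᵀ_{SᵢSᵢ} ([C]_{SᵢSᵢ}[P]_{SᵢSᵢ}[C]ᵀ_{SᵢSᵢ} + [V]_{SᵢSᵢ})⁻¹`. -/
def K1mat (A : Matrix (idx nv) (idx nv) ℝ) (C : Matrix (idx pv) (idx nv) ℝ)
    (V : Matrix (idx pv) (idx pv) ℝ) (P : Matrix (idx nv) (idx nv) ℝ) :
    Matrix (idx nv) (idx pv) ℝ := fun a b =>
  if h : b.1 ∈ Sset a.1 then
    (blockRow A a.1 * subCols P (Sset a.1) * (subBB C (Sset a.1) (Sset a.1))ᵀ *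
      (subBB C (Sset a.1) (Sset a.1) * subBB P (Sset a.1) (Sset a.1) *
        (subBB C (Sset a.1) (Sset a.1))ᵀ + subBB V (Sset a.1) (Sset a.1))⁻¹) a.2 ⟨b, h⟩
  else 0

/-- The standard Kalman gain `K = A P Cᵀ (C P Cᵀ + V)⁻¹`. -/
def Kgain (A : Matrix (idx nv) (idx nv) ℝ) (C : Matrix (idx pv) (idx nv) ℝ)
    (V : Matrix (idx pv) (idx pv) ℝ) (P : Matrix (idx nv) (idx nv) ℝ) :
    Matrix (idx nv) (idx pv) ℝ :=
  A * P * Cᵀ * (C * P * Cᵀ + V)⁻¹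

/-- The Kalman error covariance recursion `P(0) = P0`,
`P(k+1) = A P(k) Aᵀ + W − K(k) C P(k) Aᵀ`. -/
def Pmat (A : Matrix (idx nv) (idx nv) ℝ) (C : Matrix (idx pv) (idx nv) ℝ)
    (V : Matrix (idx pv) (idx pv) ℝ) (W P0 : Matrix (idx nv) (idx nv) ℝ) :
    ℕ → Matrix (idx nv) (idx nv) ℝ
  | 0 => P0
  | k + 1 =>
      A * Pmat A C V W P0 k * Aᵀ + W -
        Kgain A C V (Pmat A C V W P0 k) * (C * Pmat A C V W P0 k * Aᵀ)

variable {Ω : Type} [MeasurableSpace Ω]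

/-- The one-step Kalman predictor `x̂(k | k−1)`: `x̂(0 | −1) = 0` and
`x̂(k+1 | k) = A x̂(k | k−1) + B u(k) + K(k)(y(k) − C x̂(k | k−1))`. -/
def xpred (A : Matrix (idx nv) (idx nv) ℝ) (B : Matrix (idx nv) (idx qv) ℝ)
    (C : Matrix (idx pv) (idx nv) ℝ) (V : Matrix (idx pv) (idx pv) ℝ)
    (W P0 : Matrix (idx nv) (idx nv) ℝ)
    (u : ℕ → Ω → idx qv → ℝ) (y : ℕ → Ω → idx pv → ℝ) :
    ℕ → Ω → idx nv → ℝ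
  | 0 => fun _ => 0
  | k + 1 => fun ω =>
      A *ᵥ xpred A B C V W P0 u y k ω + B *ᵥ u k ω +
        Kgain A C V (Pmat A C V W P0 k) *ᵥ (y k ω - C *ᵥ xpred A B C V W P0 u y k ω)

/-- The innovation `ỹ(k) = y(k) − C x̂(k | k−1)`. -/
def innov (A : Matrix (idx nv) (idx nv) ℝ) (B : Matrix (idx nv) (idx qv) ℝ)
    (C : Matrix (idx pv) (idx nv) ℝ) (V : Matrix (idx pv) (idx pv) ℝ)
    (W P0 : Matrix (idx nv) (idx nv) ℝ)
    (u : ℕ → Ω → idx qv → ℝ) (y : ℕ → Ω → idx pv → ℝ) (k : ℕ) : Ω → idx pv → ℝ :=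
  fun ω => y k ω - C *ᵥ xpred A B C V W P0 u y k ω

/-- The improved local estimate
`x̂¹(k) = A x̂(k−1 | k−2) + B u(k−1) + K¹(k−1)(y(k−1) − C x̂(k−1 | k−2))` (for `k ≥ 1`). -/
def xh1 (A : Matrix (idx nv) (idx nv) ℝ) (B : Matrix (idx nv) (idx qv) ℝ)
    (C : Matrix (idx pv) (idx nv) ℝ) (V : Matrix (idx pv) (idx pv) ℝ)
    (W P0 : Matrix (idx nv) (idx nv) ℝ)
    (u : ℕ → Ω → idx qv → ℝ) (y : ℕ → Ω → idx pv → ℝ) (k : ℕ) : Ω → idx nv → ℝ :=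
  fun ω =>
    A *ᵥ xpred A B C V W P0 u y (k - 1) ω + B *ᵥ u (k - 1) ω +
      K1mat A C V (Pmat A C V W P0 (k - 1)) *ᵥ innov A B C V W P0 u y (k - 1) ω

/-- A random vector is (jointly) Gaussian when every linear functional of it has a
(possibly degenerate) one-dimensional Gaussian distribution. -/
def IsGaussianVec {d : Type} [Fintype d] (μ : Measure Ω) (X : Ω → d → ℝ) : Prop :=
  ∀ l : d → ℝ, ∃ m s, μ.map (fun ω => ∑ i, l i * X ω i) = gaussianReal m s

/-- The standing noise assumptions: `x(0), w(0),…,w(N−1), v(0),…,v(N−1)` are measurable,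
mutually independent and Gaussian with mean zero and covariances `P0`, `W`, `V`. -/
def NoiseOK (μ : Measure Ω) (N : ℕ) (P0 W : Matrix (idx nv) (idx nv) ℝ)
    (V : Matrix (idx pv) (idx pv) ℝ) (x0 : Ω → idx nv → ℝ)
    (w : ℕ → Ω → idx nv → ℝ) (v : ℕ → Ω → idx pv → ℝ) : Prop :=
  Measurable x0 ∧ (∀ k, Measurable (w k)) ∧ (∀ k, Measurable (v k)) ∧
  iIndep (fun i : Unit ⊕ Fin N ⊕ Fin N =>
    Sum.elim (fun _ => MeasurableSpace.comap x0 inferInstance)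
      (Sum.elim (fun k : Fin N => MeasurableSpace.comap (w ↑k) inferInstance)
        (fun k : Fin N => MeasurableSpace.comap (v ↑k) inferInstance)) i) μ ∧
  IsGaussianVec μ x0 ∧ (∀ k < N, IsGaussianVec μ (w k)) ∧ (∀ k < N, IsGaussianVec μ (v k)) ∧
  (∀ i, ∫ ω, x0 ω i ∂μ = 0) ∧ (∀ i j, ∫ ω, x0 ω i * x0 ω j ∂μ = P0 i j) ∧
  (∀ k < N, ∀ i, ∫ ω, w k ω i ∂μ = 0) ∧
  (∀ k < N, ∀ i j, ∫ ω, w k ω i * w k ω j ∂μ = W i j) ∧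
  (∀ k < N, ∀ i, ∫ ω, v k ω i ∂μ = 0) ∧
  (∀ k < N, ∀ i j, ∫ ω, v k ω i * v k ω j ∂μ = V i j)

/-- The closed-loop equations induced by the admissible control law `(F, G, Φ)`:
`x(k+1) = A x(k) + B u(k) + w(k)`, `y(k) = C x(k) + v(k)`, and
`u(k) = F(k) y(k) + G(k) y(k−1) + ∑_{j ≤ k−2} Φ(k,j) y(j)` (absent terms for `k = 0`). -/
def ClosedLoop (A : Matrix (idx nv) (idx nv) ℝ) (B : Matrix (idx nv) (idx qv) ℝ)
    (C : Matrix (idx pv) (idx nv) ℝ) (x0 : Ω → idx nv → ℝ)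
    (w : ℕ → Ω → idx nv → ℝ) (v : ℕ → Ω → idx pv → ℝ)
    (F G : ℕ → Matrix (idx qv) (idx pv) ℝ) (Φ : ℕ → ℕ → Matrix (idx qv) (idx pv) ℝ)
    (x : ℕ → Ω → idx nv → ℝ) (u : ℕ → Ω → idx qv → ℝ) (y : ℕ → Ω → idx pv → ℝ) : Prop :=
  (∀ ω, x 0 ω = x0 ω) ∧
  (∀ k, ∀ ω, x (k + 1) ω = A *ᵥ x k ω + B *ᵥ u k ω + w k ω) ∧
  (∀ k, ∀ ω, y k ω = C *ᵥ x k ω + v k ω) ∧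
  (∀ k, ∀ ω, u k ω = F k *ᵥ y k ω +
    (if 1 ≤ k then G k *ᵥ y (k - 1) ω else 0) +
    ∑ j ∈ Finset.range (k - 1), Φ k j *ᵥ y j ω)

/-- Sparsity constraints of the three-player information structure: `F(k)` block diagonal
and `G(k)` with zero blocks at `(1,2), (2,3), (3,1)`. -/
def Admissible (F G : ℕ → Matrix (idx qv) (idx pv) ℝ) : Prop :=
  (∀ k, BlockDiag (F k)) ∧ (∀ k, CyclicSparse (G k))

/-- `σ(y(0), …, y(k−2))`: the common two-step-delayed information. -/
def pastSigma (y : ℕ → Ω → idx pv → ℝ) (k : ℕ) : MeasurableSpace Ω :=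
  ⨆ j ∈ Finset.range (k - 1), MeasurableSpace.comap (y j) inferInstance

/- The control drops out of the prediction error `e(k) = x(k) − x̂(k | k−1)` and of the innovation
`ỹ(k)`, so both are linear in the noise. The residual `F(k) ỹ¹(k) + F¹(k) ỹ(k−1)` is a linear
combination of `e(k−1)`, `w(k−1)`, `v(k)` and `ỹ(k−1)`, all of which are uncorrelated with
`ỹ(0), …, ỹ(k−2)`: for `e` this is the orthogonality property of the Kalman gain, whose normal
equations hold because `P(k)` is the covariance of `e(k)`. Everything lives in one Gaussian space,
hence the residual is independent of those innovations, and therefore of the outputs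
`y(0), …, y(k−2)` that they generate. What remains of `u(k)` is linear in these outputs, so
conditioning on them leaves exactly the residual. -/

section CoordinateSpaces

variable {α d e : Type*}

/-- The random vectors indexed by `d` all of whose coordinates lie in the space `H` of random
variables. Closure of such a class under linear operations is then closure of a submodule. -/
def coordsIn (H : Submodule ℝ (α → ℝ)) (d : Type*) : Submodule ℝ (α → d → ℝ) where
  carrier := {X | ∀ i, (fun ω => X ω i) ∈ H}
  add_mem' hX hY i := H.add_mem (hX i) (hY i)
  zero_mem' _ := H.zero_mem
  smul_mem' c _ hX i := H.smul_mem c (hX i)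

lemma mulVec_mem_coordsIn [Fintype d] {H : Submodule ℝ (α → ℝ)} {X : α → d → ℝ}
    (M : Matrix e d ℝ) (hX : X ∈ coordsIn H d) : (fun ω => M *ᵥ X ω) ∈ coordsIn H e := by
  intro i
  convert H.sum_mem fun j (_ : j ∈ univ) => H.smul_mem (M i j) (hX j) using 1
  ext ω
  simp only [mulVec, dotProduct, Finset.sum_apply, Pi.smul_apply, smul_eq_mul]

lemma sum_mulVec_mem_coordsIn {ι : Type*} [Fintype d] {H : Submodule ℝ (α → ℝ)} {s : Finset ι}
    {X : ι → α → d → ℝ} (M : ι → Matrix e d ℝ) (hX : ∀ i ∈ s, X i ∈ coordsIn H d) :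
    (fun ω => ∑ i ∈ s, M i *ᵥ X i ω) ∈ coordsIn H e := by
  have hsum : (fun ω => ∑ i ∈ s, M i *ᵥ X i ω) = ∑ i ∈ s, fun ω => M i *ᵥ X i ω := by
    ext1 ω
    rw [Finset.sum_apply]
  exact hsum ▸ sum_mem fun i hi => mulVec_mem_coordsIn (M i) (hX i hi)

lemma coordsIn_mono {H H' : Submodule ℝ (α → ℝ)} (h : H ≤ H') : coordsIn H d ≤ coordsIn H' d :=
  fun _ hX i => h (hX i)

/-- The space spanned by the coordinates of a random vector. -/
def coordSpan (X : α → d → ℝ) : Submodule ℝ (α → ℝ) :=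
  Submodule.span ℝ (Set.range fun i ω => X ω i)

lemma self_mem_coordsIn_coordSpan (X : α → d → ℝ) : X ∈ coordsIn (coordSpan X) d :=
  fun i => Submodule.subset_span ⟨i, rfl⟩

/-- The space of real functions measurable with respect to a given σ-algebra. -/
def measurableFunctions (m : MeasurableSpace α) : Submodule ℝ (α → ℝ) where
  carrier := {f | Measurable[m] f}
  add_mem' hf hg := hf.add hg
  zero_mem' := measurable_zero
  smul_mem' c _ hf := hf.const_smul c

lemma mem_coordsIn_measurableFunctions {m : MeasurableSpace α} {X : α → d → ℝ} :
    X ∈ coordsIn (measurableFunctions m) d ↔ Measurable[m] X :=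
  measurable_pi_iff.symm

lemma coordSpan_le_measurableFunctions (X : α → d → ℝ) :
    coordSpan X ≤ measurableFunctions (MeasurableSpace.comap X inferInstance) :=
  Submodule.span_le.2 <| Set.range_subset_iff.2 <|
    mem_coordsIn_measurableFunctions.2 (comap_measurable X)

end CoordinateSpaces

section CrossCovariance

variable {α : Type*} {mα : MeasurableSpace α} {μ : Measure α} {d d' e e' : Type*}

/-- The cross-covariance matrix `Cov(X, Y)` of two random vectors. -/
def crossCov (μ : Measure α) (X : α → d → ℝ) (Y : α → e → ℝ) : Matrix d e ℝ :=
  of fun i j => cov[fun ω => X ω i, fun ω => Y ω j; μ]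

lemma transpose_crossCov (X : α → d → ℝ) (Y : α → e → ℝ) :
    (crossCov μ X Y)ᵀ = crossCov μ Y X := by
  ext i j
  exact covariance_comm _ _

variable [Fintype d] [Fintype e]

lemma memLp_mulVec {X : α → d → ℝ} (M : Matrix d' d ℝ) [Fintype d'] (hX : MemLp X 2 μ) :
    MemLp (fun ω => M *ᵥ X ω) 2 μ :=
  M.mulVecLin.toContinuousLinearMap.comp_memLp' hX

variable [IsFiniteMeasure μ]

lemma crossCov_add_left {X Y : α → d → ℝ} {Z : α → e → ℝ} (hX : MemLp X 2 μ) (hY : MemLp Y 2 μ)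
    (hZ : MemLp Z 2 μ) :
    crossCov μ (fun ω => X ω + Y ω) Z = crossCov μ X Z + crossCov μ Y Z := by
  ext i j
  exact covariance_add_left (hX.eval i) (hY.eval i) (hZ.eval j)

lemma crossCov_add_right {X : α → d → ℝ} {Y Z : α → e → ℝ} (hX : MemLp X 2 μ) (hY : MemLp Y 2 μ)
    (hZ : MemLp Z 2 μ) :
    crossCov μ X (fun ω => Y ω + Z ω) = crossCov μ X Y + crossCov μ X Z := by
  simp only [← transpose_crossCov _ X, crossCov_add_left hY hZ hX, transpose_add]

lemma crossCov_sub_left {X Y : α → d → ℝ} {Z : α → e → ℝ} (hX : MemLp X 2 μ) (hY : MemLp Y 2 μ)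
    (hZ : MemLp Z 2 μ) :
    crossCov μ (fun ω => X ω - Y ω) Z = crossCov μ X Z - crossCov μ Y Z := by
  ext i j
  exact covariance_sub_left (hX.eval i) (hY.eval i) (hZ.eval j)

lemma crossCov_sub_right {X : α → d → ℝ} {Y Z : α → e → ℝ} (hX : MemLp X 2 μ) (hY : MemLp Y 2 μ)
    (hZ : MemLp Z 2 μ) :
    crossCov μ X (fun ω => Y ω - Z ω) = crossCov μ X Y - crossCov μ X Z := by
  simp only [← transpose_crossCov _ X, crossCov_sub_left hY hZ hX, transpose_sub]

lemma crossCov_mulVec_left {X : α → d → ℝ} {Y : α → e → ℝ} (M : Matrix d' d ℝ)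
    (hX : MemLp X 2 μ) (hY : MemLp Y 2 μ) :
    crossCov μ (fun ω => M *ᵥ X ω) Y = M * crossCov μ X Y := by
  ext i j
  simp only [crossCov, mulVec, dotProduct, of_apply, mul_apply]
  rw [covariance_fun_sum_left (fun l => (hX.eval l).const_mul (M i l)) (hY.eval j)]
  simp only [covariance_const_mul_left]

lemma crossCov_mulVec_right {X : α → d → ℝ} {Y : α → e → ℝ} (M : Matrix e' e ℝ)
    (hX : MemLp X 2 μ) (hY : MemLp Y 2 μ) :
    crossCov μ X (fun ω => M *ᵥ Y ω) = crossCov μ X Y * Mᵀ := by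
  rw [← transpose_crossCov, crossCov_mulVec_left M hY hX, transpose_mul, transpose_crossCov]

lemma posSemidef_crossCov_self {X : α → d → ℝ} (hX : MemLp X 2 μ) :
    (crossCov μ X X).PosSemidef := by
  refine .of_dotProduct_mulVec_nonneg ?_ fun z => ?_
  · rw [IsHermitian, conjTranspose_eq_transpose_of_trivial, transpose_crossCov]
  have hz (i : d) : MemLp (fun ω => z i * X ω i) 2 μ := (hX.eval i).const_mul (z i)
  have hvar : star z ⬝ᵥ crossCov μ X X *ᵥ z = Var[fun ω => ∑ i, z i * X ω i; μ] := by
    rw [← covariance_self (memLp_finsetSum _ fun i _ => hz i).aemeasurable,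
      covariance_fun_sum_fun_sum hz hz]
    simp only [dotProduct, mulVec, Finset.mul_sum, crossCov, of_apply, star_trivial,
      covariance_const_mul_left, covariance_const_mul_right]
    exact sum_congr rfl fun i _ => sum_congr rfl fun j _ => by ring
  exact hvar ▸ variance_nonneg _ _

lemma crossCov_mulVec_add_mulVec_add [Fintype d'] [Fintype e'] {X : α → d → ℝ} {Y : α → d' → ℝ}
    {Z : α → e' → ℝ} (M : Matrix d' d ℝ) (L : Matrix e' d ℝ) (hX : MemLp X 2 μ)
    (hY : MemLp Y 2 μ) (hZ : MemLp Z 2 μ) (hXY : crossCov μ X Y = 0) (hXZ : crossCov μ X Z = 0) :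
    crossCov μ (fun ω => M *ᵥ X ω + Y ω) (fun ω => L *ᵥ X ω + Z ω) =
      M * crossCov μ X X * Lᵀ + crossCov μ Y Z := by
  have hYX : crossCov μ Y X = 0 := by rw [← transpose_crossCov, hXY, transpose_zero]
  have hMX := memLp_mulVec M hX
  have hLX := memLp_mulVec L hX
  have hLXZ : MemLp (fun ω => L *ᵥ X ω + Z ω) 2 μ := hLX.add hZ
  rw [crossCov_add_left hMX hY hLXZ, crossCov_add_right hMX hLX hZ,
    crossCov_add_right hY hLX hZ, crossCov_mulVec_left M hX hZ, hXZ,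
    crossCov_mulVec_right L hY hX, hYX, crossCov_mulVec_right L hMX hX,
    crossCov_mulVec_left M hX hX, Matrix.mul_zero, Matrix.zero_mul, add_zero, zero_add]

/-- The hypothesis `hK` is the system of normal equations: `K *ᵥ Y` is the linear mean-square
projection of `X` onto `Y`. -/
lemma crossCov_sub_mulVec_eq_zero {X : α → d → ℝ} {Y : α → e → ℝ} {K : Matrix d e ℝ}
    (hX : MemLp X 2 μ) (hY : MemLp Y 2 μ) (hK : K * crossCov μ Y Y = crossCov μ X Y) :
    crossCov μ (fun ω => X ω - K *ᵥ Y ω) Y = 0 := by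
  rw [crossCov_sub_left hX (memLp_mulVec K hY) hY, crossCov_mulVec_left K hY hY, hK, sub_self]

lemma crossCov_sub_mulVec_self {X : α → d → ℝ} {Y : α → e → ℝ} {K : Matrix d e ℝ}
    (hX : MemLp X 2 μ) (hY : MemLp Y 2 μ) (hK : K * crossCov μ Y Y = crossCov μ X Y) :
    crossCov μ (fun ω => X ω - K *ᵥ Y ω) (fun ω => X ω - K *ᵥ Y ω) =
      crossCov μ X X - K * crossCov μ Y X := by
  have hKY := memLp_mulVec K hY
  have hXKY : MemLp (fun ω => X ω - K *ᵥ Y ω) 2 μ := hX.sub hKY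
  rw [crossCov_sub_right hXKY hX hKY, crossCov_mulVec_right K hXKY hY,
    crossCov_sub_mulVec_eq_zero hX hY hK, Matrix.zero_mul, sub_zero,
    crossCov_sub_left hX hKY hX, crossCov_mulVec_left K hY hX]

/-- The square-integrable random variables uncorrelated with every coordinate of `Y`. -/
def uncorrelatedWith {Y : α → e → ℝ} (hY : MemLp Y 2 μ) : Submodule ℝ (α → ℝ) where
  carrier := {f | MemLp f 2 μ ∧ ∀ j, cov[f, fun ω => Y ω j; μ] = 0}
  add_mem' hf hg := ⟨hf.1.add hg.1, fun j => by
    rw [covariance_add_left hf.1 hg.1 (hY.eval j), hf.2, hg.2, add_zero]⟩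
  zero_mem' := ⟨MemLp.zero, fun _ => covariance_zero_left⟩
  smul_mem' c _ hf := ⟨hf.1.const_smul c, fun j => by
    rw [covariance_smul_left, hf.2, mul_zero]⟩

lemma mem_coordsIn_uncorrelatedWith {X : α → d → ℝ} {Y : α → e → ℝ} (hY : MemLp Y 2 μ) :
    X ∈ coordsIn (uncorrelatedWith hY) d ↔ MemLp X 2 μ ∧ crossCov μ X Y = 0 := by
  rw [memLp_pi_iff, ← Matrix.ext_iff, ← forall_and]
  rfl

lemma mem_coordsIn_uncorrelatedWith_comm {X : α → d → ℝ} {Y : α → e → ℝ} {hY : MemLp Y 2 μ}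
    (hX : MemLp X 2 μ) (h : X ∈ coordsIn (uncorrelatedWith hY) d) :
    Y ∈ coordsIn (uncorrelatedWith hX) e := by
  rw [mem_coordsIn_uncorrelatedWith] at h ⊢
  exact ⟨hY, by rw [← transpose_crossCov, h.2, transpose_zero]⟩

lemma mem_coordsIn_uncorrelatedWith_of_indepFun {X : α → d → ℝ} {Y : α → e → ℝ}
    (hX : MemLp X 2 μ) (hY : MemLp Y 2 μ) (h : IndepFun X Y μ) :
    X ∈ coordsIn (uncorrelatedWith hY) d :=
  fun i => ⟨hX.eval i, fun j =>
    (h.comp (measurable_pi_apply i) (measurable_pi_apply j)).covariance_eq_zero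
      (hX.eval i) (hY.eval j)⟩

end CrossCovariance

section GaussianSpaces

variable {α : Type*} {mα : MeasurableSpace α} {μ : Measure α} {H : Submodule ℝ (α → ℝ)}
  {d e : Type*} {X : α → d → ℝ} {Y : α → e → ℝ}

/-- A centered Gaussian space: a vector space of random variables each of which is Gaussian with
mean zero. By Cramér–Wold, finitely many elements of it are jointly Gaussian. -/
def IsGaussianSpace (μ : Measure α) (H : Submodule ℝ (α → ℝ)) : Prop :=
  ∀ f ∈ H, HasGaussianLaw f μ ∧ ∫ ω, f ω ∂μ = 0

lemma hasGaussianLaw_of_forall_dotProduct [Fintype d]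
    (h : ∀ l : d → ℝ, HasGaussianLaw (fun ω => l ⬝ᵥ X ω) μ) : HasGaussianLaw X μ := by
  classical
  have hX : AEMeasurable X μ := aemeasurable_pi_iff.2 fun i => by
    simpa only [single_dotProduct, one_mul] using (h (Pi.single i 1)).aemeasurable
  refine ⟨isGaussian_of_map_eq_gaussianReal fun L => ?_⟩
  have hL : ⇑L ∘ X = fun ω => (fun i => L fun j => if i = j then 1 else 0) ⬝ᵥ X ω := by
    ext ω
    rw [Function.comp_apply, ← ContinuousLinearMap.coe_coe, LinearMap.pi_apply_eq_sum_univ]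
    simp only [dotProduct, smul_eq_mul, mul_comm, ContinuousLinearMap.coe_coe]
  rw [AEMeasurable.map_map_of_aemeasurable L.continuous.aemeasurable hX, hL]
  exact ⟨_, _, (h _).map_eq_gaussianReal⟩

namespace IsGaussianSpace

lemma memLp_two [Fintype d] (hH : IsGaussianSpace μ H) (hX : X ∈ coordsIn H d) : MemLp X 2 μ :=
  MemLp.of_eval fun i => (hH _ (hX i)).1.memLp_two

lemma integrable [Fintype d] (hH : IsGaussianSpace μ H) (hX : X ∈ coordsIn H d) :
    Integrable X μ :=
  Integrable.of_eval fun i => (hH _ (hX i)).1.integrable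

lemma integral_eq_zero [Fintype d] (hH : IsGaussianSpace μ H) (hX : X ∈ coordsIn H d) :
    ∫ ω, X ω ∂μ = 0 := by
  ext i
  rw [eval_integral fun i => (hH _ (hX i)).1.integrable]
  exact (hH _ (hX i)).2

lemma hasGaussianLaw [Finite d] (hH : IsGaussianSpace μ H) (hX : X ∈ coordsIn H d) :
    HasGaussianLaw X μ := by
  cases nonempty_fintype d
  exact hasGaussianLaw_of_forall_dotProduct fun l =>
    (hH _ (mulVec_mem_coordsIn (of fun _ : Unit => l) hX ())).1

lemma indepFun_of_crossCov_eq_zero [Finite d] [Finite e] (hH : IsGaussianSpace μ H)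
    (hX : X ∈ coordsIn H d) (hY : Y ∈ coordsIn H e) (h : crossCov μ X Y = 0) :
    IndepFun X Y μ := by
  cases nonempty_fintype d
  cases nonempty_fintype e
  have hXY : (fun ω => Sum.elim (X ω) (Y ω)) ∈ coordsIn H (d ⊕ e) := Sum.rec hX hY
  exact ((hH.hasGaussianLaw hXY).map_fun
    (ContinuousLinearEquiv.sumPiEquivProdPi ℝ d e fun _ => ℝ).toContinuousLinearMap
      ).indepFun_of_covariance_eval fun i j => congrFun₂ h i j

end IsGaussianSpace

lemma isGaussianSpace_coordSpan [Fintype d]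
    (hX : ∀ l : d → ℝ, HasGaussianLaw (fun ω => l ⬝ᵥ X ω) μ)
    (hX0 : ∀ i, ∫ ω, X ω i ∂μ = 0) : IsGaussianSpace μ (coordSpan X) := by
  intro f hf
  obtain ⟨l, rfl⟩ := (Submodule.mem_span_range_iff_exists_fun ℝ).1 hf
  have hsum : ∑ i, l i • (fun ω => X ω i) = fun ω => l ⬝ᵥ X ω := by
    ext ω
    simp only [dotProduct, Finset.sum_apply, Pi.smul_apply, smul_eq_mul]
  have hint : Integrable X μ := (hasGaussianLaw_of_forall_dotProduct hX).integrable
  refine ⟨hsum ▸ hX l, ?_⟩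
  simp only [hsum, dotProduct]
  rw [integral_finsetSum _ fun i _ => (hint.eval i).const_mul (l i)]
  simp only [integral_const_mul, hX0, mul_zero, sum_const_zero]

lemma isGaussianSpace_iSup {ι : Type*} [Finite ι] {m : ι → MeasurableSpace α}
    {H : ι → Submodule ℝ (α → ℝ)} (hm : iIndep m μ) (hHm : ∀ i, H i ≤ measurableFunctions (m i))
    (hH : ∀ i, IsGaussianSpace μ (H i)) : IsGaussianSpace μ (⨆ i, H i) := by
  cases nonempty_fintype ι
  intro f hf
  obtain ⟨g, hgH, rfl⟩ := (Submodule.mem_iSup_iff_exists_finsupp H f).1 hf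
  have hgauss (i : ι) : HasGaussianLaw (g i) μ := (hH i _ (hgH i)).1
  have hindep : iIndepFun (fun i => g i) μ :=
    (iIndepFun_iff_iIndep _ _ _).2 <|
      iIndep_of_iIndep_of_le hm fun i => Measurable.comap_le (hHm i (hgH i))
  rw [Finsupp.sum_fintype _ _ fun _ => rfl]
  refine ⟨iIndepFun.hasGaussianLaw_sum hgauss hindep, ?_⟩
  simp only [Finset.sum_apply]
  rw [integral_finsetSum _ fun i _ => (hgauss i).integrable]
  exact sum_eq_zero fun i _ => (hH i _ (hgH i)).2

end GaussianSpaces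

section ConditionalExpectation

variable {α E : Type*} {m mα : MeasurableSpace α} {μ : Measure α} [NormedAddCommGroup E]
  [NormedSpace ℝ E] [MeasurableSpace E] [BorelSpace E] {R S U : α → E}

lemma sub_condExp_add_ae_eq_of_indep [IsProbabilityMeasure μ] [CompleteSpace E]
    [SecondCountableTopology E] (hm : m ≤ mα) (hR : Measurable R) (hRi : Integrable R μ)
    (hR0 : ∫ ω, R ω ∂μ = 0) (hRm : Indep (MeasurableSpace.comap R inferInstance) m μ)
    (hS : Measurable[m] S) (hSi : Integrable S μ) : R + S - μ[R + S | m] =ᵐ[μ] R := by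
  have hR' : μ[R | m] =ᵐ[μ] fun _ => ∫ ω, R ω ∂μ :=
    condExp_indep_eq hR.comap_le hm (comap_measurable R).stronglyMeasurable hRm
  have hS' : μ[S | m] = S := condExp_of_stronglyMeasurable hm hS.stronglyMeasurable hSi
  filter_upwards [condExp_add hRi hSi m, hR'] with ω hadd hω
  rw [Pi.sub_apply, hadd, Pi.add_apply, Pi.add_apply, hω, hS', hR0, zero_add, add_sub_cancel_right]

lemma indepFun_sub_condExp_of_ae_eq (hUR : U - μ[U | m] =ᵐ[μ] R)
    (hRm : Indep (MeasurableSpace.comap R inferInstance) m μ) :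
    IndepFun (U - μ[U | m]) (μ[U | m]) μ := by
  have hRU : IndepFun R (μ[U | m]) μ := (IndepFun_iff_Indep _ _ _).2 <|
    indep_of_indep_of_le_right hRm stronglyMeasurable_condExp.measurable.comap_le
  exact hRU.congr hUR.symm .rfl

end ConditionalExpectation

section NoiseSpace

variable {α d e : Type*}

/-- The space spanned by the coordinates of all the primitive random vectors
`x(0), w(0), …, w(N−1), v(0), …, v(N−1)`. -/
def noiseSpace (N : ℕ) (x0 : α → d → ℝ) (w : ℕ → α → d → ℝ) (v : ℕ → α → e → ℝ) :
    Submodule ℝ (α → ℝ) :=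
  ⨆ i : Unit ⊕ Fin N ⊕ Fin N, Sum.elim (fun _ => coordSpan x0)
    (Sum.elim (fun k : Fin N => coordSpan (w k)) fun k : Fin N => coordSpan (v k)) i

variable {N k : ℕ} {x0 : α → d → ℝ} {w : ℕ → α → d → ℝ} {v : ℕ → α → e → ℝ}

lemma initial_mem_noiseSpace : x0 ∈ coordsIn (noiseSpace N x0 w v) d :=
  have hle : coordSpan x0 ≤ noiseSpace N x0 w v := le_iSup_of_le (.inl ()) le_rfl
  coordsIn_mono hle (self_mem_coordsIn_coordSpan x0)

lemma process_mem_noiseSpace (hk : k < N) :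
    w k ∈ coordsIn (noiseSpace N x0 w v) d :=
  have hle : coordSpan (w k) ≤ noiseSpace N x0 w v := le_iSup_of_le (.inr (.inl ⟨k, hk⟩)) le_rfl
  coordsIn_mono hle (self_mem_coordsIn_coordSpan (w k))

lemma measurement_mem_noiseSpace (hk : k < N) :
    v k ∈ coordsIn (noiseSpace N x0 w v) e :=
  have hle : coordSpan (v k) ≤ noiseSpace N x0 w v := le_iSup_of_le (.inr (.inr ⟨k, hk⟩)) le_rfl
  coordsIn_mono hle (self_mem_coordsIn_coordSpan (v k))

end NoiseSpace

section Observer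

variable {α n p : Type*} [Fintype n] [Fintype p] (A : Matrix n n ℝ) (C : Matrix p n ℝ)
  (K : ℕ → Matrix n p ℝ) (x0 : α → n → ℝ) (w : ℕ → α → n → ℝ) (v : ℕ → α → p → ℝ)

/-- The estimation error `x(k) − x̂(k | k−1)` of the linear observer with gains `K` for
`x(k+1) = A x(k) + B u(k) + w(k)`, `y(k) = C x(k) + v(k)`. The control drops out of it, so it is
defined directly from the noise. -/
def observerError : ℕ → α → n → ℝ
  | 0 => x0
  | k + 1 => fun ω => A *ᵥ observerError k ω + w k ω - K k *ᵥ (C *ᵥ observerError k ω + v k ω)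

/-- The innovation `C (x(k) − x̂(k | k−1)) + v(k)` of the linear observer with gains `K`. -/
def observerInnovation (k : ℕ) : α → p → ℝ :=
  fun ω => C *ᵥ observerError A C K x0 w v k ω + v k ω

/-- The part of the control `u(k+1) = F(k+1) y(k+1) + G(k+1) y(k) + …` that is new given
`y(0), …, y(k−1)`, expressed through the estimation error, the innovation and the noise. -/
def controlResidual {q : Type*} [Fintype q] (B : Matrix n q ℝ) (F G : ℕ → Matrix q p ℝ) (k : ℕ) :
    α → q → ℝ :=
  fun ω =>
    F (k + 1) *ᵥ (C *ᵥ (A *ᵥ observerError A C K x0 w v k ω + w k ω) + v (k + 1) ω) +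
      (G (k + 1) + F (k + 1) * C * B * F k) *ᵥ observerInnovation A C K x0 w v k ω

/-- The vector of the observer's innovations at the times before `k`, as one random vector. -/
def pastInnovations (k : ℕ) : α → Fin k × p → ℝ :=
  fun ω i => observerInnovation A C K x0 w v i.1 ω i.2

variable {A C K x0 w v} {T : Submodule ℝ (α → ℝ)}

lemma observerError_mem (hx : x0 ∈ coordsIn T n) :
    ∀ {k : ℕ}, (∀ i < k, w i ∈ coordsIn T n) → (∀ i < k, v i ∈ coordsIn T p) →
      observerError A C K x0 w v k ∈ coordsIn T n
  | 0, _, _ => hx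
  | k + 1, hw, hv => by
    have he := observerError_mem hx (fun i hi => hw i (hi.trans k.lt_succ_self))
      fun i hi => hv i (hi.trans k.lt_succ_self)
    exact sub_mem (add_mem (mulVec_mem_coordsIn A he) (hw k k.lt_succ_self))
      (mulVec_mem_coordsIn (K k) (add_mem (mulVec_mem_coordsIn C he) (hv k k.lt_succ_self)))

lemma observerInnovation_mem {k : ℕ} (he : observerError A C K x0 w v k ∈ coordsIn T n)
    (hv : v k ∈ coordsIn T p) : observerInnovation A C K x0 w v k ∈ coordsIn T p :=
  add_mem (mulVec_mem_coordsIn C he) hv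

lemma controlResidual_mem {q : Type*} [Fintype q] {B : Matrix n q ℝ} {F G : ℕ → Matrix q p ℝ}
    {k : ℕ} (he : observerError A C K x0 w v k ∈ coordsIn T n) (hw : w k ∈ coordsIn T n)
    (hv : v k ∈ coordsIn T p) (hv' : v (k + 1) ∈ coordsIn T p) :
    controlResidual A C K x0 w v B F G k ∈ coordsIn T q :=
  add_mem
    (mulVec_mem_coordsIn _ <|
      add_mem (mulVec_mem_coordsIn C <| add_mem (mulVec_mem_coordsIn A he) hw) hv')
    (mulVec_mem_coordsIn _ <| observerInnovation_mem he hv)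

lemma observerError_mem_noiseSpace {N k : ℕ} (hk : k ≤ N) :
    observerError A C K x0 w v k ∈ coordsIn (noiseSpace N x0 w v) n :=
  observerError_mem initial_mem_noiseSpace (fun _ hi => process_mem_noiseSpace (hi.trans_le hk))
    fun _ hi => measurement_mem_noiseSpace (hi.trans_le hk)

lemma observerInnovation_mem_noiseSpace {N k : ℕ} (hk : k < N) :
    observerInnovation A C K x0 w v k ∈ coordsIn (noiseSpace N x0 w v) p :=
  observerInnovation_mem (observerError_mem_noiseSpace hk.le) (measurement_mem_noiseSpace hk)

lemma pastInnovations_mem_noiseSpace {N k : ℕ} (hk : k ≤ N) :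
    pastInnovations A C K x0 w v k ∈ coordsIn (noiseSpace N x0 w v) (Fin k × p) :=
  fun i => observerInnovation_mem_noiseSpace (i.1.2.trans_le hk) i.2

lemma controlResidual_mem_noiseSpace {q : Type*} [Fintype q] {B : Matrix n q ℝ}
    {F G : ℕ → Matrix q p ℝ} {N k : ℕ} (hk : k + 1 < N) :
    controlResidual A C K x0 w v B F G k ∈ coordsIn (noiseSpace N x0 w v) q :=
  have hk' := k.lt_succ_self.trans hk
  controlResidual_mem (observerError_mem_noiseSpace hk'.le) (process_mem_noiseSpace hk')
    (measurement_mem_noiseSpace hk') (measurement_mem_noiseSpace hk)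

end Observer

section Noise

variable {μ : Measure Ω} {N : ℕ} {P0 W : Matrix (idx nv) (idx nv) ℝ}
  {V : Matrix (idx pv) (idx pv) ℝ} {x0 : Ω → idx nv → ℝ} {w : ℕ → Ω → idx nv → ℝ}
  {v : ℕ → Ω → idx pv → ℝ}

lemma IsGaussianVec.hasGaussianLaw_dotProduct {d : Type} [Fintype d] {X : Ω → d → ℝ}
    (hX : IsGaussianVec μ X) (l : d → ℝ) : HasGaussianLaw (fun ω => l ⬝ᵥ X ω) μ := by
  obtain ⟨m, s, h⟩ := hX l
  exact ⟨(show μ.map (fun ω => l ⬝ᵥ X ω) = gaussianReal m s from h) ▸ inferInstance⟩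

lemma crossCov_self_eq_of_integral_eq [IsProbabilityMeasure μ] {d : Type} [Fintype d]
    {X : Ω → d → ℝ} {Q : Matrix d d ℝ} (hX : MemLp X 2 μ) (hX0 : ∀ i, ∫ ω, X ω i ∂μ = 0)
    (hXX : ∀ i j, ∫ ω, X ω i * X ω j ∂μ = Q i j) : crossCov μ X X = Q := by
  ext i j
  simp only [crossCov, of_apply, covariance_eq_sub (hX.eval i) (hX.eval j), hX0, mul_zero,
    sub_zero, Pi.mul_apply, hXX]

namespace NoiseOK

lemma isGaussianSpace (h : NoiseOK μ N P0 W V x0 w v) :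
    IsGaussianSpace μ (noiseSpace N x0 w v) := by
  obtain ⟨-, -, -, hindep, gx, gw, gv, mx, -, mw, -, mv, -⟩ := h
  refine isGaussianSpace_iSup hindep ?_ ?_
  · rintro (_ | _ | _) <;> exact coordSpan_le_measurableFunctions _
  · rintro (_ | i | i)
    · exact isGaussianSpace_coordSpan gx.hasGaussianLaw_dotProduct mx
    · exact isGaussianSpace_coordSpan (gw i i.2).hasGaussianLaw_dotProduct (mw i i.2)
    · exact isGaussianSpace_coordSpan (gv i i.2).hasGaussianLaw_dotProduct (mv i i.2)

lemma memLp_process (h : NoiseOK μ N P0 W V x0 w v) {k : ℕ} (hk : k < N) : MemLp (w k) 2 μ :=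
  h.isGaussianSpace.memLp_two (process_mem_noiseSpace hk)

lemma memLp_measurement (h : NoiseOK μ N P0 W V x0 w v) {k : ℕ} (hk : k < N) : MemLp (v k) 2 μ :=
  h.isGaussianSpace.memLp_two (measurement_mem_noiseSpace hk)

lemma indepFun_initial_process (h : NoiseOK μ N P0 W V x0 w v) {k : ℕ} (hk : k < N) :
    IndepFun x0 (w k) μ :=
  (IndepFun_iff_Indep _ _ _).2 <|
    h.2.2.2.1.indep (i := .inl ()) (j := .inr (.inl ⟨k, hk⟩)) Sum.inl_ne_inr

lemma indepFun_initial_measurement (h : NoiseOK μ N P0 W V x0 w v) {k : ℕ} (hk : k < N) :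
    IndepFun x0 (v k) μ :=
  (IndepFun_iff_Indep _ _ _).2 <|
    h.2.2.2.1.indep (i := .inl ()) (j := .inr (.inr ⟨k, hk⟩)) Sum.inl_ne_inr

lemma indepFun_process (h : NoiseOK μ N P0 W V x0 w v) {i k : ℕ} (hi : i < N) (hk : k < N)
    (hik : i ≠ k) : IndepFun (w i) (w k) μ :=
  (IndepFun_iff_Indep _ _ _).2 <|
    h.2.2.2.1.indep (i := .inr (.inl ⟨i, hi⟩)) (j := .inr (.inl ⟨k, hk⟩)) (by simpa using hik)

lemma indepFun_measurement (h : NoiseOK μ N P0 W V x0 w v) {i k : ℕ} (hi : i < N) (hk : k < N)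
    (hik : i ≠ k) : IndepFun (v i) (v k) μ :=
  (IndepFun_iff_Indep _ _ _).2 <|
    h.2.2.2.1.indep (i := .inr (.inr ⟨i, hi⟩)) (j := .inr (.inr ⟨k, hk⟩)) (by simpa using hik)

lemma indepFun_process_measurement (h : NoiseOK μ N P0 W V x0 w v) {i k : ℕ} (hi : i < N)
    (hk : k < N) : IndepFun (w i) (v k) μ :=
  (IndepFun_iff_Indep _ _ _).2 <|
    h.2.2.2.1.indep (i := .inr (.inl ⟨i, hi⟩)) (j := .inr (.inr ⟨k, hk⟩)) (by simp)

variable [IsProbabilityMeasure μ]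

lemma crossCov_initial (h : NoiseOK μ N P0 W V x0 w v) : crossCov μ x0 x0 = P0 := by
  have hx := h.isGaussianSpace.memLp_two initial_mem_noiseSpace
  obtain ⟨-, -, -, -, -, -, -, mx, cx, -⟩ := h
  exact crossCov_self_eq_of_integral_eq hx mx cx

lemma crossCov_process (h : NoiseOK μ N P0 W V x0 w v) {k : ℕ} (hk : k < N) :
    crossCov μ (w k) (w k) = W := by
  have hw := h.memLp_process hk
  obtain ⟨-, -, -, -, -, -, -, -, -, mw, cw, -⟩ := h
  exact crossCov_self_eq_of_integral_eq hw (mw k hk) (cw k hk)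

lemma crossCov_measurement (h : NoiseOK μ N P0 W V x0 w v) {k : ℕ} (hk : k < N) :
    crossCov μ (v k) (v k) = V := by
  have hv := h.memLp_measurement hk
  obtain ⟨-, -, -, -, -, -, -, -, -, -, -, mv, cv⟩ := h
  exact crossCov_self_eq_of_integral_eq hv (mv k hk) (cv k hk)

/-- The square-integrable random variables uncorrelated with both noises `w(k)` and `v(k)` that
enter at time `k`. -/
def uncorrelatedAt (h : NoiseOK μ N P0 W V x0 w v) {k : ℕ} (hk : k < N) : Submodule ℝ (Ω → ℝ) :=
  uncorrelatedWith (h.memLp_process hk) ⊓ uncorrelatedWith (h.memLp_measurement hk)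

variable {A : Matrix (idx nv) (idx nv) ℝ} {C : Matrix (idx pv) (idx nv) ℝ}
  {K : ℕ → Matrix (idx nv) (idx pv) ℝ}

lemma process_mem_uncorrelatedAt (h : NoiseOK μ N P0 W V x0 w v) {i k : ℕ} (hik : i < k)
    (hk : k < N) : w i ∈ coordsIn (h.uncorrelatedAt hk) (idx nv) := by
  have hi := hik.trans hk
  have hwi := h.memLp_process hi
  exact fun a =>
    ⟨mem_coordsIn_uncorrelatedWith_of_indepFun hwi _ (h.indepFun_process hi hk hik.ne) a,
      mem_coordsIn_uncorrelatedWith_of_indepFun hwi _ (h.indepFun_process_measurement hi hk) a⟩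

lemma measurement_mem_uncorrelatedAt (h : NoiseOK μ N P0 W V x0 w v) {i k : ℕ} (hik : i < k)
    (hk : k < N) : v i ∈ coordsIn (h.uncorrelatedAt hk) (idx pv) := by
  have hi := hik.trans hk
  have hvi := h.memLp_measurement hi
  exact fun a =>
    ⟨mem_coordsIn_uncorrelatedWith_of_indepFun hvi _ (h.indepFun_process_measurement hk hi).symm a,
      mem_coordsIn_uncorrelatedWith_of_indepFun hvi _ (h.indepFun_measurement hi hk hik.ne) a⟩

lemma initial_mem_uncorrelatedAt (h : NoiseOK μ N P0 W V x0 w v) {k : ℕ} (hk : k < N) :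
    x0 ∈ coordsIn (h.uncorrelatedAt hk) (idx nv) := by
  have hx := h.isGaussianSpace.memLp_two initial_mem_noiseSpace
  exact fun a =>
    ⟨mem_coordsIn_uncorrelatedWith_of_indepFun hx _ (h.indepFun_initial_process hk) a,
      mem_coordsIn_uncorrelatedWith_of_indepFun hx _ (h.indepFun_initial_measurement hk) a⟩

lemma observerError_mem_uncorrelatedAt (h : NoiseOK μ N P0 W V x0 w v) {j k : ℕ} (hjk : j ≤ k)
    (hk : k < N) :
    observerError A C K x0 w v j ∈ coordsIn (h.uncorrelatedAt hk) (idx nv) :=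
  observerError_mem (h.initial_mem_uncorrelatedAt hk)
    (fun _ hi => h.process_mem_uncorrelatedAt (hi.trans_le hjk) hk)
    fun _ hi => h.measurement_mem_uncorrelatedAt (hi.trans_le hjk) hk

lemma observerInnovation_mem_uncorrelatedAt (h : NoiseOK μ N P0 W V x0 w v) {j k : ℕ} (hjk : j < k)
    (hk : k < N) :
    observerInnovation A C K x0 w v j ∈ coordsIn (h.uncorrelatedAt hk) (idx pv) :=
  observerInnovation_mem (h.observerError_mem_uncorrelatedAt hjk.le hk)
    (h.measurement_mem_uncorrelatedAt hjk hk)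

end NoiseOK

end Noise

section KalmanFilter

variable {μ : Measure Ω} {N : ℕ} {A : Matrix (idx nv) (idx nv) ℝ}
  {C : Matrix (idx pv) (idx nv) ℝ} {V : Matrix (idx pv) (idx pv) ℝ}
  {W P0 : Matrix (idx nv) (idx nv) ℝ} {K : ℕ → Matrix (idx nv) (idx pv) ℝ}
  {x0 : Ω → idx nv → ℝ} {w : ℕ → Ω → idx nv → ℝ} {v : ℕ → Ω → idx pv → ℝ}

variable (A C V W P0) in
/-- The sequence of gains `K(k) = A P(k) Cᵀ Ỹ(k)⁻¹` of the Kalman filter. -/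
def kalmanGain (k : ℕ) : Matrix (idx nv) (idx pv) ℝ :=
  Kgain A C V (Pmat A C V W P0 k)

lemma Kgain_mul {P : Matrix (idx nv) (idx nv) ℝ} (hP : P.PosSemidef) (hV : V.PosDef) :
    Kgain A C V P * (C * P * Cᵀ + V) = A * P * Cᵀ := by
  have hCPC : (C * P * Cᵀ).PosSemidef := by
    simpa only [conjTranspose_eq_transpose_of_trivial] using hP.mul_mul_conjTranspose_same C
  have hunit := (isUnit_iff_isUnit_det _).1 (hV.posSemidef_add hCPC).isUnit
  rw [Kgain, Matrix.mul_assoc, nonsing_inv_mul _ hunit, Matrix.mul_one]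

namespace NoiseOK

lemma memLp_observerError (h : NoiseOK μ N P0 W V x0 w v) {k : ℕ} (hk : k ≤ N) :
    MemLp (observerError A C K x0 w v k) 2 μ :=
  h.isGaussianSpace.memLp_two (observerError_mem_noiseSpace hk)

lemma memLp_observerInnovation (h : NoiseOK μ N P0 W V x0 w v) {k : ℕ} (hk : k < N) :
    MemLp (observerInnovation A C K x0 w v k) 2 μ :=
  h.isGaussianSpace.memLp_two (observerInnovation_mem_noiseSpace hk)

lemma memLp_mulVec_observerError_add (h : NoiseOK μ N P0 W V x0 w v) {k : ℕ} (hk : k < N) :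
    MemLp (fun ω => A *ᵥ observerError A C K x0 w v k ω + w k ω) 2 μ :=
  (memLp_mulVec A (h.memLp_observerError hk.le)).add (h.memLp_process hk)

variable [IsProbabilityMeasure μ]

lemma crossCov_observerError_process (h : NoiseOK μ N P0 W V x0 w v) {k : ℕ} (hk : k < N) :
    crossCov μ (observerError A C K x0 w v k) (w k) = 0 :=
  ((mem_coordsIn_uncorrelatedWith _).1 <|
    coordsIn_mono inf_le_left (h.observerError_mem_uncorrelatedAt le_rfl hk)).2

lemma crossCov_observerError_measurement (h : NoiseOK μ N P0 W V x0 w v) {k : ℕ} (hk : k < N) :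
    crossCov μ (observerError A C K x0 w v k) (v k) = 0 :=
  ((mem_coordsIn_uncorrelatedWith _).1 <|
    coordsIn_mono inf_le_right (h.observerError_mem_uncorrelatedAt le_rfl hk)).2

lemma crossCov_process_measurement (h : NoiseOK μ N P0 W V x0 w v) {k : ℕ} (hk : k < N) :
    crossCov μ (w k) (v k) = 0 :=
  ((mem_coordsIn_uncorrelatedWith (h.memLp_measurement hk)).1 <|
    mem_coordsIn_uncorrelatedWith_of_indepFun (h.memLp_process hk) _
      (h.indepFun_process_measurement hk hk)).2

lemma crossCov_observerInnovation_self (h : NoiseOK μ N P0 W V x0 w v) {k : ℕ} (hk : k < N) :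
    crossCov μ (observerInnovation A C K x0 w v k) (observerInnovation A C K x0 w v k) =
      C * crossCov μ (observerError A C K x0 w v k) (observerError A C K x0 w v k) * Cᵀ + V := by
  have hev := h.crossCov_observerError_measurement (A := A) (C := C) (K := K) hk
  have hv := h.memLp_measurement hk
  rw [← h.crossCov_measurement hk]
  exact crossCov_mulVec_add_mulVec_add C C (h.memLp_observerError hk.le) hv hv hev hev

lemma crossCov_mulVec_observerError_add_self (h : NoiseOK μ N P0 W V x0 w v) {k : ℕ}
    (hk : k < N) :
    crossCov μ (fun ω => A *ᵥ observerError A C K x0 w v k ω + w k ω)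
        (fun ω => A *ᵥ observerError A C K x0 w v k ω + w k ω) =
      A * crossCov μ (observerError A C K x0 w v k) (observerError A C K x0 w v k) * Aᵀ + W := by
  have hew := h.crossCov_observerError_process (A := A) (C := C) (K := K) hk
  have hw := h.memLp_process hk
  rw [← h.crossCov_process hk]
  exact crossCov_mulVec_add_mulVec_add A A (h.memLp_observerError hk.le) hw hw hew hew

lemma crossCov_mulVec_observerError_add_observerInnovation (h : NoiseOK μ N P0 W V x0 w v)
    {k : ℕ} (hk : k < N) :
    crossCov μ (fun ω => A *ᵥ observerError A C K x0 w v k ω + w k ω)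
        (observerInnovation A C K x0 w v k) =
      A * crossCov μ (observerError A C K x0 w v k) (observerError A C K x0 w v k) * Cᵀ := by
  rw [← add_zero (A * _ * _), ← h.crossCov_process_measurement hk]
  exact crossCov_mulVec_add_mulVec_add A C (h.memLp_observerError hk.le) (h.memLp_process hk)
    (h.memLp_measurement hk) (h.crossCov_observerError_process hk)
    (h.crossCov_observerError_measurement hk)

lemma crossCov_observerInnovation_mulVec_observerError_add (h : NoiseOK μ N P0 W V x0 w v)
    {k : ℕ} (hk : k < N) :
    crossCov μ (observerInnovation A C K x0 w v k)
        (fun ω => A *ᵥ observerError A C K x0 w v k ω + w k ω) =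
      C * crossCov μ (observerError A C K x0 w v k) (observerError A C K x0 w v k) * Aᵀ := by
  rw [← transpose_crossCov, h.crossCov_mulVec_observerError_add_observerInnovation hk,
    transpose_mul, transpose_mul, transpose_transpose, transpose_crossCov, Matrix.mul_assoc]

lemma kalmanGain_mul_crossCov (h : NoiseOK μ N P0 W V x0 w v) (hV : V.PosDef) {k : ℕ}
    (hk : k < N)
    (hP : crossCov μ (observerError A C K x0 w v k) (observerError A C K x0 w v k) =
      Pmat A C V W P0 k) :
    kalmanGain A C V W P0 k *
        crossCov μ (observerInnovation A C K x0 w v k) (observerInnovation A C K x0 w v k) =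
      crossCov μ (fun ω => A *ᵥ observerError A C K x0 w v k ω + w k ω)
        (observerInnovation A C K x0 w v k) := by
  have hPsd : (Pmat A C V W P0 k).PosSemidef :=
    hP ▸ posSemidef_crossCov_self (h.memLp_observerError hk.le)
  rw [h.crossCov_observerInnovation_self hk,
    h.crossCov_mulVec_observerError_add_observerInnovation hk, hP, kalmanGain, Kgain_mul hPsd hV]

theorem crossCov_kalman_observerError_self (h : NoiseOK μ N P0 W V x0 w v) (hV : V.PosDef) :
    ∀ {k : ℕ}, k ≤ N →
      crossCov μ (observerError A C (kalmanGain A C V W P0) x0 w v k)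
        (observerError A C (kalmanGain A C V W P0) x0 w v k) = Pmat A C V W P0 k
  | 0, _ => h.crossCov_initial
  | k + 1, hk => by
    have hP := crossCov_kalman_observerError_self h hV (k.le_succ.trans hk)
    have hupdate := crossCov_sub_mulVec_self (h.memLp_mulVec_observerError_add hk)
      (h.memLp_observerInnovation hk) (h.kalmanGain_mul_crossCov hV hk hP)
    rw [h.crossCov_mulVec_observerError_add_self hk,
      h.crossCov_observerInnovation_mulVec_observerError_add hk, hP] at hupdate
    exact hupdate

theorem kalman_observerError_mem_uncorrelatedWith (h : NoiseOK μ N P0 W V x0 w v) (hV : V.PosDef)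
    {j : ℕ} (hj : j < N) : ∀ {k : ℕ}, j < k → k ≤ N →
      observerError A C (kalmanGain A C V W P0) x0 w v k ∈ coordsIn
        (uncorrelatedWith (h.memLp_observerInnovation (A := A) (C := C)
          (K := kalmanGain A C V W P0) hj)) (idx nv)
  | k + 1, hjk, hk => by
    obtain hjk | rfl := (Nat.lt_succ_iff.1 hjk).lt_or_eq
    · have he := kalman_observerError_mem_uncorrelatedWith h hV hj hjk (k.le_succ.trans hk)
      have hr := h.observerInnovation_mem_uncorrelatedAt (A := A) (C := C)
        (K := kalmanGain A C V W P0) hjk hk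
      have hrj := h.memLp_observerInnovation (A := A) (C := C) (K := kalmanGain A C V W P0) hj
      have hw := mem_coordsIn_uncorrelatedWith_comm hrj (coordsIn_mono inf_le_left hr)
      have hv := mem_coordsIn_uncorrelatedWith_comm hrj (coordsIn_mono inf_le_right hr)
      exact sub_mem (add_mem (mulVec_mem_coordsIn A he) hw)
        (mulVec_mem_coordsIn _ (observerInnovation_mem he hv))
    · have hP := h.crossCov_kalman_observerError_self (A := A) (C := C) hV hj.le
      exact (mem_coordsIn_uncorrelatedWith _).2 ⟨h.memLp_observerError hk,
        crossCov_sub_mulVec_eq_zero (h.memLp_mulVec_observerError_add hj)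
          (h.memLp_observerInnovation hj) (h.kalmanGain_mul_crossCov hV hj hP)⟩

end NoiseOK

end KalmanFilter

section PastOutputs

variable {α : Type} {m : MeasurableSpace α} {y : ℕ → α → idx pv → ℝ} {n : ℕ}

lemma pastSigma_succ_le (hy : ∀ j < n, Measurable[m] (y j)) : pastSigma y (n + 1) ≤ m :=
  iSup₂_le fun j hj => (hy j (mem_range.1 hj)).comap_le

lemma measurable_pastSigma_succ {j : ℕ} (hj : j < n) : Measurable[pastSigma y (n + 1)] (y j) :=
  measurable_iff_comap_le.2 <| le_iSup₂_of_le j (mem_range.2 hj) le_rfl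

end PastOutputs

section ClosedLoopSystem

variable {α : Type} {A : Matrix (idx nv) (idx nv) ℝ} {B : Matrix (idx nv) (idx qv) ℝ}
  {C : Matrix (idx pv) (idx nv) ℝ} {V : Matrix (idx pv) (idx pv) ℝ}
  {W P0 : Matrix (idx nv) (idx nv) ℝ} {x0 : α → idx nv → ℝ} {w : ℕ → α → idx nv → ℝ}
  {v : ℕ → α → idx pv → ℝ} {F G : ℕ → Matrix (idx qv) (idx pv) ℝ}
  {Φ : ℕ → ℕ → Matrix (idx qv) (idx pv) ℝ} {x : ℕ → α → idx nv → ℝ} {u : ℕ → α → idx qv → ℝ}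
  {y : ℕ → α → idx pv → ℝ}

namespace ClosedLoop

lemma sub_xpred (h : ClosedLoop A B C x0 w v F G Φ x u y) (ω : α) :
    ∀ k, x k ω - xpred A B C V W P0 u y k ω =
      observerError A C (kalmanGain A C V W P0) x0 w v k ω
  | 0 => (sub_zero _).trans (h.1 ω)
  | k + 1 => by
    rw [h.2.1, xpred, observerError, kalmanGain]
    beta_reduce
    rw [← h.sub_xpred ω k, h.2.2.1]
    simp only [mulVec_add, mulVec_sub]
    abel

lemma innov_eq (h : ClosedLoop A B C x0 w v F G Φ x u y) (k : ℕ) (ω : α) :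
    innov A B C V W P0 u y k ω = observerInnovation A C (kalmanGain A C V W P0) x0 w v k ω := by
  rw [innov, observerInnovation, ← h.sub_xpred, h.2.2.1, mulVec_sub, add_sub_right_comm]

lemma output_eq (h : ClosedLoop A B C x0 w v F G Φ x u y) (k : ℕ) (ω : α) :
    y k ω = C *ᵥ xpred A B C V W P0 u y k ω +
      observerInnovation A C (kalmanGain A C V W P0) x0 w v k ω := by
  rw [← h.innov_eq, innov, add_sub_cancel]

lemma state_succ_sub (h : ClosedLoop A B C x0 w v F G Φ x u y) (k : ℕ) (ω : α) :
    x (k + 1) ω - (A *ᵥ xpred A B C V W P0 u y k ω + B *ᵥ u k ω) =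
      A *ᵥ observerError A C (kalmanGain A C V W P0) x0 w v k ω + w k ω := by
  rw [← h.sub_xpred ω k, h.2.1, mulVec_sub]
  abel

/-- The gain `L` cancels, so the locally computable gain `K¹` does as well as any other. -/
lemma feedback_residual_eq (h : ClosedLoop A B C x0 w v F G Φ x u y)
    (L : Matrix (idx nv) (idx pv) ℝ) (n : ℕ) (ω : α) :
    F (n + 1) *ᵥ (y (n + 1) ω - C *ᵥ (A *ᵥ xpred A B C V W P0 u y n ω + B *ᵥ u n ω +
          L *ᵥ innov A B C V W P0 u y n ω)) +
        (G (n + 1) + F (n + 1) * C * (L + B * F n)) *ᵥ innov A B C V W P0 u y n ω =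
      controlResidual A C (kalmanGain A C V W P0) x0 w v B F G n ω := by
  rw [controlResidual, ← h.state_succ_sub, ← h.innov_eq, h.2.2.1 (n + 1)]
  simp only [mulVec_add, mulVec_sub, add_mulVec, Matrix.mul_add, ← mulVec_mulVec]
  abel

lemma control_sub_controlResidual (h : ClosedLoop A B C x0 w v F G Φ x u y) (n : ℕ) (ω : α) :
    u (n + 1) ω - controlResidual A C (kalmanGain A C V W P0) x0 w v B F G n ω =
      (F (n + 1) * C * A + (F (n + 1) * C * B * F n + G (n + 1)) * C) *ᵥ
          xpred A B C V W P0 u y n ω +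
        (F (n + 1) * C * B) *ᵥ (u n ω - F n *ᵥ y n ω) +
        ∑ j ∈ range n, Φ (n + 1) j *ᵥ y j ω := by
  rw [controlResidual, ← h.state_succ_sub, ← h.innov_eq, h.2.2.2 (n + 1), h.2.2.1 (n + 1), innov,
    if_pos (Nat.le_add_left 1 n), Nat.add_sub_cancel]
  simp only [mulVec_add, mulVec_sub, add_mulVec, ← mulVec_mulVec]
  abel

variable {T : Submodule ℝ (α → ℝ)}

lemma control_sub_mulVec_output_mem (h : ClosedLoop A B C x0 w v F G Φ x u y) {k : ℕ}
    (hy : ∀ j < k, y j ∈ coordsIn T (idx pv)) :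
    (fun ω => u k ω - F k *ᵥ y k ω) ∈ coordsIn T (idx qv) := by
  have hu : (fun ω => u k ω - F k *ᵥ y k ω) = fun ω =>
      (if 1 ≤ k then G k *ᵥ y (k - 1) ω else 0) + ∑ j ∈ range (k - 1), Φ k j *ᵥ y j ω := by
    ext1 ω
    rw [h.2.2.2 k, add_assoc, add_sub_cancel_left]
  have hsum := sum_mulVec_mem_coordsIn (s := range (k - 1)) (Φ k) fun j hj =>
    hy j ((mem_range.1 hj).trans_le k.pred_le)
  rw [hu]
  refine add_mem ?_ hsum
  split_ifs with hk
  · exact mulVec_mem_coordsIn (G k) (hy (k - 1) (Nat.sub_one_lt_of_lt hk))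
  · exact zero_mem _

lemma control_mem (h : ClosedLoop A B C x0 w v F G Φ x u y) {k : ℕ}
    (hy : ∀ j ≤ k, y j ∈ coordsIn T (idx pv)) : u k ∈ coordsIn T (idx qv) := by
  convert add_mem (h.control_sub_mulVec_output_mem fun j hj => hy j hj.le)
    (mulVec_mem_coordsIn (F k) (hy k le_rfl)) using 1
  ext1 ω
  exact (sub_add_cancel _ _).symm

lemma xpred_mem (h : ClosedLoop A B C x0 w v F G Φ x u y) :
    ∀ {k : ℕ}, (∀ j < k, y j ∈ coordsIn T (idx pv)) →
      xpred A B C V W P0 u y k ∈ coordsIn T (idx nv)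
  | 0, _ => zero_mem _
  | k + 1, hy => by
    have hx := h.xpred_mem fun j hj => hy j (hj.trans k.lt_succ_self)
    have hu := h.control_mem fun j hj => hy j (Nat.lt_succ_of_le hj)
    exact add_mem (add_mem (mulVec_mem_coordsIn A hx) (mulVec_mem_coordsIn B hu))
      (mulVec_mem_coordsIn _ (sub_mem (hy k k.lt_succ_self) (mulVec_mem_coordsIn C hx)))

lemma output_mem_of_observerInnovation_mem (h : ClosedLoop A B C x0 w v F G Φ x u y) {k : ℕ}
    (hr : ∀ j ≤ k, observerInnovation A C (kalmanGain A C V W P0) x0 w v j ∈ coordsIn T (idx pv)) :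
    y k ∈ coordsIn T (idx pv) := by
  induction k using Nat.strong_induction_on with
  | h k ih =>
    have hx : xpred A B C V W P0 u y k ∈ coordsIn T (idx nv) :=
      h.xpred_mem fun j hj => ih j hj fun i hi => hr i (hi.trans hj.le)
    rw [funext (h.output_eq (V := V) (W := W) (P0 := P0) k)]
    exact add_mem (mulVec_mem_coordsIn C hx) (hr k le_rfl)

lemma control_sub_controlResidual_mem (h : ClosedLoop A B C x0 w v F G Φ x u y) {n : ℕ}
    (hy : ∀ j < n, y j ∈ coordsIn T (idx pv)) :
    u (n + 1) - controlResidual A C (kalmanGain A C V W P0) x0 w v B F G n ∈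
      coordsIn T (idx qv) := by
  have heq : u (n + 1) - controlResidual A C (kalmanGain A C V W P0) x0 w v B F G n = _ :=
    funext (h.control_sub_controlResidual n)
  rw [heq]
  exact add_mem
    (add_mem (mulVec_mem_coordsIn _ (h.xpred_mem hy))
      (mulVec_mem_coordsIn _ (h.control_sub_mulVec_output_mem hy)))
    (sum_mulVec_mem_coordsIn _ fun j hj => hy j (mem_range.1 hj))

lemma pastSigma_le_comap_pastInnovations (h : ClosedLoop A B C x0 w v F G Φ x u y) {n : ℕ} :
    pastSigma y (n + 1) ≤ MeasurableSpace.comap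
      (pastInnovations A C (kalmanGain A C V W P0) x0 w v n) inferInstance := by
  refine pastSigma_succ_le fun j hj => mem_coordsIn_measurableFunctions.1 <|
    h.output_mem_of_observerInnovation_mem (V := V) (W := W) (P0 := P0) fun i hi b => ?_
  have heval : Measurable fun f : Fin n × idx pv → ℝ => f (⟨i, hi.trans_lt hj⟩, b) :=
    measurable_pi_apply _
  exact heval.comp (comap_measurable _)

end ClosedLoop

end ClosedLoopSystem

section Separation

variable {μ : Measure Ω} {N n : ℕ} {A : Matrix (idx nv) (idx nv) ℝ}
  {B : Matrix (idx nv) (idx qv) ℝ} {C : Matrix (idx pv) (idx nv) ℝ}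
  {V : Matrix (idx pv) (idx pv) ℝ} {W P0 : Matrix (idx nv) (idx nv) ℝ}
  {x0 : Ω → idx nv → ℝ} {w : ℕ → Ω → idx nv → ℝ} {v : ℕ → Ω → idx pv → ℝ}
  {K : ℕ → Matrix (idx nv) (idx pv) ℝ}
  {F G : ℕ → Matrix (idx qv) (idx pv) ℝ} {Φ : ℕ → ℕ → Matrix (idx qv) (idx pv) ℝ}
  {x : ℕ → Ω → idx nv → ℝ} {u : ℕ → Ω → idx qv → ℝ} {y : ℕ → Ω → idx pv → ℝ}

namespace NoiseOK

lemma measurable_observerError (h : NoiseOK μ N P0 W V x0 w v) (k : ℕ) :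
    Measurable (observerError A C K x0 w v k) := by
  have hx := mem_coordsIn_measurableFunctions.2 h.1
  have hw (i : ℕ) := mem_coordsIn_measurableFunctions.2 (h.2.1 i)
  have hv (i : ℕ) := mem_coordsIn_measurableFunctions.2 (h.2.2.1 i)
  exact mem_coordsIn_measurableFunctions.1 <|
    observerError_mem hx (fun i _ => hw i) fun i _ => hv i

lemma measurable_observerInnovation (h : NoiseOK μ N P0 W V x0 w v) (k : ℕ) :
    Measurable (observerInnovation A C K x0 w v k) :=
  mem_coordsIn_measurableFunctions.1 <|
    observerInnovation_mem (mem_coordsIn_measurableFunctions.2 (h.measurable_observerError k))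
      (mem_coordsIn_measurableFunctions.2 (h.2.2.1 k))

lemma measurable_controlResidual (h : NoiseOK μ N P0 W V x0 w v) (k : ℕ) :
    Measurable (controlResidual A C K x0 w v B F G k) :=
  mem_coordsIn_measurableFunctions.1 <|
    controlResidual_mem (mem_coordsIn_measurableFunctions.2 (h.measurable_observerError k))
      (mem_coordsIn_measurableFunctions.2 (h.2.1 k))
      (mem_coordsIn_measurableFunctions.2 (h.2.2.1 k))
      (mem_coordsIn_measurableFunctions.2 (h.2.2.1 (k + 1)))

variable [IsProbabilityMeasure μ]

lemma kalman_controlResidual_mem_uncorrelatedWith (h : NoiseOK μ N P0 W V x0 w v)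
    (hV : V.PosDef) {j : ℕ} (hjn : j < n) (hn : n + 1 < N) :
    controlResidual A C (kalmanGain A C V W P0) x0 w v B F G n ∈ coordsIn
      (uncorrelatedWith (h.memLp_observerInnovation (A := A) (C := C)
        (K := kalmanGain A C V W P0) (hjn.trans (n.lt_succ_self.trans hn)))) (idx qv) := by
  have hn' := n.lt_succ_self.trans hn
  have hrj := h.memLp_observerInnovation (A := A) (C := C) (K := kalmanGain A C V W P0)
    (hjn.trans hn')
  have hr {k : ℕ} (hjk : j < k) (hk : k < N) := h.observerInnovation_mem_uncorrelatedAt (A := A)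
    (C := C) (K := kalmanGain A C V W P0) hjk hk
  exact controlResidual_mem
    (h.kalman_observerError_mem_uncorrelatedWith hV (hjn.trans hn') hjn hn'.le)
    (mem_coordsIn_uncorrelatedWith_comm hrj (coordsIn_mono inf_le_left (hr hjn hn')))
    (mem_coordsIn_uncorrelatedWith_comm hrj (coordsIn_mono inf_le_right (hr hjn hn')))
    (mem_coordsIn_uncorrelatedWith_comm hrj
      (coordsIn_mono inf_le_right (hr (hjn.trans n.lt_succ_self) hn)))

theorem indepFun_kalman_controlResidual_pastInnovations (h : NoiseOK μ N P0 W V x0 w v)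
    (hV : V.PosDef) (hn : n + 1 < N) :
    IndepFun (controlResidual A C (kalmanGain A C V W P0) x0 w v B F G n)
      (pastInnovations A C (kalmanGain A C V W P0) x0 w v n) μ := by
  refine h.isGaussianSpace.indepFun_of_crossCov_eq_zero (controlResidual_mem_noiseSpace hn)
    (pastInnovations_mem_noiseSpace (n.le_succ.trans hn.le)) ?_
  ext a ⟨j, b⟩
  exact (h.kalman_controlResidual_mem_uncorrelatedWith hV j.2 hn a).2 b

end NoiseOK

namespace ClosedLoop

lemma measurable_output (h : ClosedLoop A B C x0 w v F G Φ x u y)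
    (hnoise : NoiseOK μ N P0 W V x0 w v) (k : ℕ) : Measurable (y k) :=
  mem_coordsIn_measurableFunctions.1 <|
    h.output_mem_of_observerInnovation_mem (V := V) (W := W) (P0 := P0) fun j _ =>
      mem_coordsIn_measurableFunctions.2 (hnoise.measurable_observerInnovation j)

variable [IsProbabilityMeasure μ]

lemma indep_controlResidual_pastSigma (h : ClosedLoop A B C x0 w v F G Φ x u y)
    (hnoise : NoiseOK μ N P0 W V x0 w v) (hV : V.PosDef) (hn : n + 1 < N) :
    Indep (MeasurableSpace.comap
        (controlResidual A C (kalmanGain A C V W P0) x0 w v B F G n) inferInstance)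
      (pastSigma y (n + 1)) μ :=
  indep_of_indep_of_le_right
    ((IndepFun_iff_Indep _ _ _).1 <|
      hnoise.indepFun_kalman_controlResidual_pastInnovations hV hn)
    h.pastSigma_le_comap_pastInnovations

theorem control_sub_condExp_ae_eq (h : ClosedLoop A B C x0 w v F G Φ x u y)
    (hnoise : NoiseOK μ N P0 W V x0 w v) (hV : V.PosDef) (hn : n + 1 < N) :
    u (n + 1) - μ[u (n + 1) | pastSigma y (n + 1)] =ᵐ[μ]
      controlResidual A C (kalmanGain A C V W P0) x0 w v B F G n := by
  set R := controlResidual A C (kalmanGain A C V W P0) x0 w v B F G n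
  have hRmem : R ∈ coordsIn (noiseSpace N x0 w v) (idx qv) := controlResidual_mem_noiseSpace hn
  have hy {j : ℕ} (hj : j ≤ n) : y j ∈ coordsIn (noiseSpace N x0 w v) (idx pv) :=
    h.output_mem_of_observerInnovation_mem (V := V) (W := W) (P0 := P0) fun i hi =>
      observerInnovation_mem_noiseSpace ((hi.trans hj).trans_lt (n.lt_succ_self.trans hn))
  have hSmem : u (n + 1) - R ∈ coordsIn (noiseSpace N x0 w v) (idx qv) :=
    h.control_sub_controlResidual_mem fun j hj => hy hj.le
  have hSmeas : Measurable[pastSigma y (n + 1)] (u (n + 1) - R) :=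
    mem_coordsIn_measurableFunctions.1 <| h.control_sub_controlResidual_mem fun j hj =>
      mem_coordsIn_measurableFunctions.2 (measurable_pastSigma_succ hj)
  have hgauss := hnoise.isGaussianSpace
  have hsplit := sub_condExp_add_ae_eq_of_indep
    (pastSigma_succ_le fun j _ => h.measurable_output hnoise j)
    (hnoise.measurable_controlResidual n) (hgauss.integrable hRmem)
    (hgauss.integral_eq_zero hRmem) (h.indep_controlResidual_pastSigma hnoise hV hn)
    hSmeas (hgauss.integrable hSmem)
  rwa [add_sub_cancel] at hsplit

end ClosedLoop

end Separation

theorem stmt5_general (μ : Measure Ω) [IsProbabilityMeasure μ] (N : ℕ)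
    (A : Matrix (idx nv) (idx nv) ℝ) (B : Matrix (idx nv) (idx qv) ℝ)
    (C : Matrix (idx pv) (idx nv) ℝ) (P0 W : Matrix (idx nv) (idx nv) ℝ)
    (V : Matrix (idx pv) (idx pv) ℝ) (hV : V.PosDef)
    (x0 : Ω → idx nv → ℝ) (w : ℕ → Ω → idx nv → ℝ) (v : ℕ → Ω → idx pv → ℝ)
    (hnoise : NoiseOK μ N P0 W V x0 w v)
    (F G : ℕ → Matrix (idx qv) (idx pv) ℝ) (Φ : ℕ → ℕ → Matrix (idx qv) (idx pv) ℝ)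
    (x : ℕ → Ω → idx nv → ℝ) (u : ℕ → Ω → idx qv → ℝ) (y : ℕ → Ω → idx pv → ℝ)
    (hcl : ClosedLoop A B C x0 w v F G Φ x u y) (L : Matrix (idx nv) (idx pv) ℝ) :
    ∀ k, 1 ≤ k → k < N →
      ((fun ω => u k ω - (μ[u k | pastSigma y k]) ω) =ᵐ[μ]
        (fun ω => F k *ᵥ (y k ω - C *ᵥ (A *ᵥ xpred A B C V W P0 u y (k - 1) ω +
              B *ᵥ u (k - 1) ω + L *ᵥ innov A B C V W P0 u y (k - 1) ω)) +
          (G k + F k * C * (L + B * F (k - 1))) *ᵥ innov A B C V W P0 u y (k - 1) ω)) ∧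
      IndepFun (fun ω => u k ω - (μ[u k | pastSigma y k]) ω) (μ[u k | pastSigma y k]) μ
  | n + 1, _, hn => by
    have hresidual := hcl.control_sub_condExp_ae_eq hnoise hV hn
    refine ⟨?_, indepFun_sub_condExp_of_ae_eq hresidual
      (hcl.indep_controlResidual_pastSigma hnoise hV hn)⟩
    rw [Nat.add_sub_cancel, funext (hcl.feedback_residual_eq L n)]
    exact hresidual

/-- with `û(k) = E[u(k) | σ(y(0),…,y(k−2))]`, `ũ(k) = u(k) − û(k)` and
`ỹ¹(k) = y(k) − C x̂¹(k)`, for every `k ≥ 1` one has almost surely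
`ũ(k) = F(k) ỹ¹(k) + F¹(k) ỹ(k−1)` with
`F¹(k) = G(k) + F(k) C (K¹(k−1) + B F(k−1))`; moreover `ũ(k)` and `û(k)` are
independent. -/
theorem stmt5 {nv qv pv : Fin 3 → ℕ} {Ω : Type} [MeasurableSpace Ω]
    (μ : Measure Ω) [IsProbabilityMeasure μ] (N : ℕ)
    (A : Matrix (idx nv) (idx nv) ℝ) (B : Matrix (idx nv) (idx qv) ℝ)
    (C : Matrix (idx pv) (idx nv) ℝ)
    (hA : CyclicSparse A) (hB : BlockDiag B) (hC : BlockDiag C)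
    (P0 W : Matrix (idx nv) (idx nv) ℝ) (V : Matrix (idx pv) (idx pv) ℝ)
    (hV : V.PosDef)
    (x0 : Ω → idx nv → ℝ) (w : ℕ → Ω → idx nv → ℝ) (v : ℕ → Ω → idx pv → ℝ)
    (hnoise : NoiseOK μ N P0 W V x0 w v)
    (F G : ℕ → Matrix (idx qv) (idx pv) ℝ) (Φ : ℕ → ℕ → Matrix (idx qv) (idx pv) ℝ)
    (hadm : Admissible F G)
    (x : ℕ → Ω → idx nv → ℝ) (u : ℕ → Ω → idx qv → ℝ) (y : ℕ → Ω → idx pv → ℝ)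
    (hcl : ClosedLoop A B C x0 w v F G Φ x u y) :
    ∀ k, 1 ≤ k → k < N →
      ((fun ω => u k ω - (μ[u k | pastSigma y k]) ω) =ᵐ[μ]
        (fun ω => F k *ᵥ (y k ω - C *ᵥ xh1 A B C V W P0 u y k ω) +
          (G k + F k * C * (K1mat A C V (Pmat A C V W P0 (k - 1)) + B * F (k - 1))) *ᵥ
            innov A B C V W P0 u y (k - 1) ω)) ∧
      IndepFun (fun ω => u k ω - (μ[u k | pastSigma y k]) ω)
        (μ[u k | pastSigma y k]) μ :=
  fun k => stmt5_general μ N A B C P0 W V hV x0 w v hnoise F G Φ x u y hcl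
    (K1mat A C V (Pmat A C V W P0 (k - 1))) k

end
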